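/- Let R be a binary predicate, A a unary predicate, and Q a ternary predicate. Let φ₁ be the GF sentence stating that R is irreflexive and symmetric, and let φ₂ be the conjunction of φ₁ with ∀x(Ax → ∀y(Rxy → ¬Ay)) ∧ ∀x(¬Ax → ∀y(Rxy → Ay)). Then: (1) φ₁ GF({R})-entails φ₂; but (2) for ψ = ∃x₁x₂x₃(Qx₁x₂x₃ ∧ Rx₁x₂ ∧ Rx₂x₃ ∧ Rx₃x₁), φ₂ ⊨ ¬ψ while φ₁ ∧ ψ is satisfiable, so φ₁ does not GF({R,Q})-entail φ₂. Hence in GF, GF(Σ)-entailment does not imply strong GF(Σ)-entailment. -/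

import Mathlib

/-! Core: relational first-order logic with equality, without function symbols
or constants, over an arbitrary signature of predicates with arities. -/

namespace FOG

/-- a relational vocabulary: predicate symbols with arities -/
structure Sig where
  Pred : Type
  ar : Pred → ℕ

/-- first-order formulas (with block quantifiers and `ℕ`-indexed variables) -/
inductive Fml (σ : Sig) : Type
  | rel (p : σ.Pred) (ts : Fin (σ.ar p) → ℕ)
  | eqv (i j : ℕ)
  | fls
  | neg (φ : Fml σ)
  | conj (φ ψ : Fml σ)
  | disj (φ ψ : Fml σ)
  | impl (φ ψ : Fml σ)
  | all (vs : List ℕ) (φ : Fml σ)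
  | ex (vs : List ℕ) (φ : Fml σ)

namespace Fml

variable {σ : Sig}

def free : Fml σ → Set ℕ
  | rel _ ts => Set.range ts
  | eqv i j => {i, j}
  | fls => ∅
  | neg φ => φ.free
  | conj φ ψ => φ.free ∪ ψ.free
  | disj φ ψ => φ.free ∪ ψ.free
  | impl φ ψ => φ.free ∪ ψ.free
  | all vs φ => φ.free \ {i | i ∈ vs}
  | ex vs φ => φ.free \ {i | i ∈ vs}

def IsSentence (φ : Fml σ) : Prop := φ.free = ∅

/-- the predicates occurring in a formula (equality is a logical symbol and
never part of a signature) -/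
def sig : Fml σ → Set σ.Pred
  | rel p _ => {p}
  | eqv _ _ => ∅
  | fls => ∅
  | neg φ => φ.sig
  | conj φ ψ => φ.sig ∪ ψ.sig
  | disj φ ψ => φ.sig ∪ ψ.sig
  | impl φ ψ => φ.sig ∪ ψ.sig
  | all _ φ => φ.sig
  | ex _ φ => φ.sig

def IsAtom : Fml σ → Prop
  | rel _ _ => True
  | eqv _ _ => True
  | _ => False

end Fml

structure Str (σ : Sig) where
  Dom : Type
  nonempty : Nonempty Dom
  rel : (p : σ.Pred) → (Fin (σ.ar p) → Dom) → Prop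

def Sat {σ : Sig} (A : Str σ) : Fml σ → (ℕ → A.Dom) → Prop
  | .rel p ts, v => A.rel p (fun i => v (ts i))
  | .eqv i j, v => v i = v j
  | .fls, _ => False
  | .neg φ, v => ¬ Sat A φ v
  | .conj φ ψ, v => Sat A φ v ∧ Sat A ψ v
  | .disj φ ψ, v => Sat A φ v ∨ Sat A ψ v
  | .impl φ ψ, v => Sat A φ v → Sat A ψ v
  | .all vs φ, v => ∀ v' : ℕ → A.Dom, (∀ i, i ∉ vs → v' i = v i) → Sat A φ v'
  | .ex vs φ, v => ∃ v' : ℕ → A.Dom, (∀ i, i ∉ vs → v' i = v i) ∧ Sat A φ v'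

def SatS {σ : Sig} (A : Str σ) (φ : Fml σ) : Prop := ∀ v, Sat A φ v

def Entails {σ : Sig} (φ ψ : Fml σ) : Prop := ∀ A : Str σ, SatS A φ → SatS A ψ

def Satisfiable {σ : Sig} (φ : Fml σ) : Prop := ∃ A : Str σ, SatS A φ

/-- The guarded fragment GF: quantification only in the patterns
`∀ȳ (α(x̄,ȳ) → φ(x̄,ȳ))` and `∃ȳ (α(x̄,ȳ) ∧ φ(x̄,ȳ))`, where the guard `α` is an
atomic formula containing all the variables of `x̄,ȳ`. -/
inductive IsGF {σ : Sig} : Fml σ → Prop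
  | rel (p : σ.Pred) (ts : Fin (σ.ar p) → ℕ) : IsGF (.rel p ts)
  | eqv (i j : ℕ) : IsGF (.eqv i j)
  | fls : IsGF .fls
  | neg {φ} : IsGF φ → IsGF (.neg φ)
  | conj {φ ψ} : IsGF φ → IsGF ψ → IsGF (.conj φ ψ)
  | disj {φ ψ} : IsGF φ → IsGF ψ → IsGF (.disj φ ψ)
  | impl {φ ψ} : IsGF φ → IsGF ψ → IsGF (.impl φ ψ)
  | allG {vs : List ℕ} {α φ : Fml σ} :
      α.IsAtom → IsGF φ → φ.free ∪ {i | i ∈ vs} ⊆ α.free →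
      IsGF (.all vs (.impl α φ))
  | exG {vs : List ℕ} {α φ : Fml σ} :
      α.IsAtom → IsGF φ → φ.free ∪ {i | i ∈ vs} ⊆ α.free →
      IsGF (.ex vs (.conj α φ))

/-- `φ₁` GF(Σ)-entails `φ₂` -/
def GFEntails {σ : Sig} (Sg : Set σ.Pred) (φ₁ φ₂ : Fml σ) : Prop :=
  ∀ ψ : Fml σ, IsGF ψ → ψ.IsSentence → ψ.sig ⊆ Sg →
    Entails φ₂ ψ → Entails φ₁ ψ

/-- `φ₁` strongly GF(Σ)-entails `φ₂` -/
def StrongGFEntails {σ : Sig} (Sg : Set σ.Pred) (φ₁ φ₂ : Fml σ) : Prop :=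
  ∀ Sg' : Set σ.Pred, Sg'.Finite → Sg' ∩ φ₂.sig ⊆ Sg → GFEntails Sg' φ₁ φ₂

end FOG

namespace FOG

/-- the signature of Example 3: a binary predicate R, a unary predicate A and
a ternary predicate Q -/
inductive P12 : Type
  | R
  | A
  | Q
deriving DecidableEq

def sig12 : Sig where
  Pred := P12
  ar := fun p => match p with
    | .R => 2
    | .A => 1
    | .Q => 3

def Rxy (i j : ℕ) : Fml sig12 := .rel P12.R ![i, j]
def Ax (i : ℕ) : Fml sig12 := .rel P12.A ![i]
def Qxyz (i j k : ℕ) : Fml sig12 := .rel P12.Q ![i, j, k]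

/-- `φ₁` : R is irreflexive and symmetric -/
def phi1 : Fml sig12 :=
  .conj (.all [0] (.impl (Rxy 0 0) .fls))
        (.all [0, 1] (.impl (Rxy 0 1) (Rxy 1 0)))

/-- `φ₂` : `φ₁` together with `∀x(Ax → ∀y(Rxy → ¬Ay)) ∧ ∀x(¬Ax → ∀y(Rxy → Ay))` -/
def phi2 : Fml sig12 :=
  .conj phi1
    (.conj (.all [0] (.impl (Ax 0) (.all [1] (.impl (Rxy 0 1) (.neg (Ax 1))))))
           (.all [0] (.impl (.neg (Ax 0)) (.all [1] (.impl (Rxy 0 1) (Ax 1))))))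

/-- `ψ = ∃x₁x₂x₃ (Qx₁x₂x₃ ∧ Rx₁x₂ ∧ Rx₂x₃ ∧ Rx₃x₁)` -/
def psi12 : Fml sig12 :=
  .ex [0, 1, 2] (.conj (Qxyz 0 1 2)
    (.conj (Rxy 0 1) (.conj (Rxy 1 2) (Rxy 2 0))))

/-!
GF(Σ)-sentences cannot tell apart structures related by a guarded Σ-bisimulation, so for GF({R})
it suffices that every model of `φ₁`, i.e. every graph, is guarded {R}-bisimilar to a model of
`φ₂`, i.e. to a graph properly 2-coloured by `A`. Its bipartite double cover is one: the links are
the maps `a ↦ (a, c a)` for colourings `c` of vertex sets on which `c` is proper, and such a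
colouring of any set can be modified to be proper on a given edge without changing it on the
part of the edge already in the set, since an edge has only two ends. A ternary guard `Q` makes
three vertices visible at once, and a triangle is not 2-colourable.
-/

section Semantics

variable {σ : Sig} {M : Str σ} {φ : Fml σ} {v : ℕ → M.Dom} {i : ℕ} {vs : List ℕ}

theorem sat_all_nil : Sat M (.all [] φ) v ↔ Sat M φ v := by
  constructor
  · exact fun h => h v fun _ _ => rfl
  · intro h v' hv'
    rwa [funext fun i => hv' i List.not_mem_nil]

theorem sat_all_cons :
    Sat M (.all (i :: vs) φ) v ↔ ∀ a, Sat M (.all vs φ) (Function.update v i a) := by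
  constructor
  · intro h a v' hv'
    refine h v' fun j hj => ?_
    rw [List.mem_cons, not_or] at hj
    rw [hv' j hj.2, Function.update_of_ne hj.1]
  · intro h v' hv'
    refine h (v' i) v' fun j hj => ?_
    by_cases hji : j = i
    · rw [hji, Function.update_self]
    · rw [Function.update_of_ne hji, hv' j (by simp [hji, hj])]

theorem sat_ex_iff_not_sat_all_neg : Sat M (.ex vs φ) v ↔ ¬ Sat M (.all vs (.neg φ)) v := by
  simp only [Sat, not_forall, not_not, exists_prop]

theorem sat_ex_nil : Sat M (.ex [] φ) v ↔ Sat M φ v := by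
  rw [sat_ex_iff_not_sat_all_neg, sat_all_nil, Sat, not_not]

theorem sat_ex_cons :
    Sat M (.ex (i :: vs) φ) v ↔ ∃ a, Sat M (.ex vs φ) (Function.update v i a) := by
  simp only [sat_ex_iff_not_sat_all_neg, sat_all_cons, not_forall]

theorem sat_all_impl_iff_not_sat_ex_conj_neg {α : Fml σ} :
    Sat M (.all vs (.impl α φ)) v ↔ ¬ Sat M (.ex vs (.conj α (.neg φ))) v := by
  simp only [Sat, not_exists, not_and, not_not]

end Semantics

section GuardedBisimulation

variable {σ : Sig} {Sg : Set σ.Pred} {M N : Str σ} {I : M.Dom → N.Dom → Prop}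
  {Z : Set (M.Dom → N.Dom → Prop)}

/-- A partial isomorphism of the `Sg`-reducts of `M` and `N`, encoded by its graph. -/
structure IsPartialIso (Sg : Set σ.Pred) (M N : Str σ) (I : M.Dom → N.Dom → Prop) : Prop where
  eq_iff : ∀ {a a' b b'}, I a b → I a' b' → (a = a' ↔ b = b')
  rel_iff : ∀ {p}, p ∈ Sg → ∀ {s t}, (∀ i, I (s i) (t i)) → (M.rel p s ↔ N.rel p t)

/-- A guarded set of `M`: one whose elements jointly satisfy an atom over `Sg`. The singletons
are those guarded by an equality. -/
def IsGuarded (Sg : Set σ.Pred) (M : Str σ) (G : Set M.Dom) : Prop :=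
  (∃ a, G = {a}) ∨ ∃ p ∈ Sg, ∃ t, M.rel p t ∧ G = Set.range t

/-- A guarded `Sg`-bisimulation: a set of partial isomorphisms with the back-and-forth property
with respect to guarded sets. The domains of the partial isomorphisms need not be guarded. -/
structure IsGuardedBisim (Sg : Set σ.Pred) (M N : Str σ)
    (Z : Set (M.Dom → N.Dom → Prop)) : Prop where
  isPartialIso : ∀ I ∈ Z, IsPartialIso Sg M N I
  forth : ∀ I ∈ Z, ∀ G, IsGuarded Sg M G →
    ∃ J ∈ Z, ∀ a ∈ G, (∃ b, J a b) ∧ ∀ b, I a b → J a b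
  back : ∀ I ∈ Z, ∀ G, IsGuarded Sg N G →
    ∃ J ∈ Z, ∀ b ∈ G, (∃ a, J a b) ∧ ∀ a, I a b → J a b

theorem IsPartialIso.symm (hI : IsPartialIso Sg M N I) : IsPartialIso Sg N M (flip I) where
  eq_iff h h' := (hI.eq_iff h h').symm
  rel_iff hp _ _ h := (hI.rel_iff hp h).symm

theorem IsGuardedBisim.symm (hZ : IsGuardedBisim Sg M N Z) :
    IsGuardedBisim Sg N M {I | flip I ∈ Z} where
  isPartialIso I hI := (hZ.isPartialIso (flip I) hI).symm
  forth I hI G hG := by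
    obtain ⟨J, hJ, h⟩ := hZ.back (flip I) hI G hG
    exact ⟨flip J, hJ, h⟩
  back I hI G hG := by
    obtain ⟨J, hJ, h⟩ := hZ.forth (flip I) hI G hG
    exact ⟨flip J, hJ, h⟩

variable {α φ : Fml σ} {vs : List ℕ} {v : ℕ → M.Dom} {w : ℕ → N.Dom}

theorem isGuarded_image_free (hα : α.IsAtom) (hαs : α.sig ⊆ Sg) (h : Sat M α v) :
    IsGuarded Sg M (v '' α.free) := by
  cases α with
  | rel p ts => exact .inr ⟨p, hαs rfl, v ∘ ts, h, (Set.range_comp v ts).symm⟩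
  | eqv i j =>
    have hij : v i = v j := h
    exact .inl ⟨v j, by simp [Fml.free, Set.image_pair, hij]⟩
  | _ => exact hα.elim

theorem IsPartialIso.sat_iff_of_isAtom (hI : IsPartialIso Sg M N I) (hα : α.IsAtom)
    (hαs : α.sig ⊆ Sg) (hvw : ∀ i ∈ α.free, I (v i) (w i)) : Sat M α v ↔ Sat N α w := by
  cases α with
  | rel p ts => exact hI.rel_iff (hαs rfl) fun i => hvw _ ⟨i, rfl⟩
  | eqv i j => exact hI.eq_iff (hvw i (.inl rfl)) (hvw j (.inr rfl))
  | _ => exact hα.elim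

theorem IsGuardedBisim.exists_forth_assignment (hZ : IsGuardedBisim Sg M N Z) (hI : I ∈ Z)
    (hα : α.IsAtom) (hαs : α.sig ⊆ Sg) (hvs : {i | i ∈ vs} ⊆ α.free)
    (hvw : ∀ i ∈ α.free \ {i | i ∈ vs}, I (v i) (w i))
    {v' : ℕ → M.Dom} (hv' : ∀ i, i ∉ vs → v' i = v i) (h : Sat M α v') :
    ∃ w' : ℕ → N.Dom, (∀ i, i ∉ vs → w' i = w i) ∧ ∃ J ∈ Z, ∀ i ∈ α.free, J (v' i) (w' i) := by
  obtain ⟨J, hJ, hJG⟩ := hZ.forth I hI _ (isGuarded_image_free hα hαs h)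
  have exists_image : ∀ i, ∃ b, (i ∈ vs → J (v' i) b) ∧ (i ∉ vs → b = w i) := by
    intro i
    by_cases hi : i ∈ vs
    · obtain ⟨b, hb⟩ := (hJG _ (Set.mem_image_of_mem v' (hvs hi))).1
      exact ⟨b, fun _ => hb, fun hi' => (hi' hi).elim⟩
    · exact ⟨w i, fun hi' => (hi hi').elim, fun _ => rfl⟩
  choose w' hJw' hw' using exists_image
  refine ⟨w', hw', J, hJ, fun i hiα => ?_⟩
  by_cases hi : i ∈ vs
  · exact hJw' i hi
  · refine (hJG _ (Set.mem_image_of_mem v' hiα)).2 _ ?_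
    rw [hv' i hi, hw' i hi]
    exact hvw i ⟨hiα, hi⟩

theorem IsGuardedBisim.sat_ex_conj (hZ : IsGuardedBisim Sg M N Z) (hI : I ∈ Z)
    (hα : α.IsAtom) (hαs : α.sig ⊆ Sg) (hfree : φ.free ∪ {i | i ∈ vs} ⊆ α.free)
    (hφ : ∀ J ∈ Z, ∀ v w, (∀ i ∈ φ.free, J (v i) (w i)) → Sat M φ v → Sat N φ w)
    (hvw : ∀ i ∈ α.free \ {i | i ∈ vs}, I (v i) (w i)) :
    Sat M (.ex vs (.conj α φ)) v → Sat N (.ex vs (.conj α φ)) w := by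
  rintro ⟨v', hv', hαv', hφv'⟩
  obtain ⟨hφα, hvsα⟩ := Set.union_subset_iff.1 hfree
  obtain ⟨w', hw', J, hJ, hvw'⟩ := hZ.exists_forth_assignment hI hα hαs hvsα hvw hv' hαv'
  exact ⟨w', hw', ((hZ.isPartialIso J hJ).sat_iff_of_isAtom hα hαs hvw').1 hαv',
    hφ J hJ v' w' (fun i hi => hvw' i (hφα hi)) hφv'⟩

theorem IsGuardedBisim.sat_ex_conj_iff (hZ : IsGuardedBisim Sg M N Z) (hI : I ∈ Z)
    (hα : α.IsAtom) (hαs : α.sig ⊆ Sg) (hfree : φ.free ∪ {i | i ∈ vs} ⊆ α.free)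
    (hφ : ∀ J ∈ Z, ∀ v w, (∀ i ∈ φ.free, J (v i) (w i)) → (Sat M φ v ↔ Sat N φ w))
    (hvw : ∀ i ∈ α.free \ {i | i ∈ vs}, I (v i) (w i)) :
    Sat M (.ex vs (.conj α φ)) v ↔ Sat N (.ex vs (.conj α φ)) w :=
  ⟨hZ.sat_ex_conj hI hα hαs hfree (fun J hJ v w h => (hφ J hJ v w h).1) hvw,
    hZ.symm.sat_ex_conj (I := flip I) hI hα hαs hfree
      (fun J hJ w v h => (hφ (flip J) hJ v w h).2) hvw⟩

theorem IsGuardedBisim.sat_iff (hZ : IsGuardedBisim Sg M N Z) (hφ : IsGF φ) (hφs : φ.sig ⊆ Sg)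
    (hI : I ∈ Z) (hvw : ∀ i ∈ φ.free, I (v i) (w i)) : Sat M φ v ↔ Sat N φ w := by
  induction hφ generalizing I v w with
  | rel p ts => exact (hZ.isPartialIso I hI).sat_iff_of_isAtom (α := .rel p ts) trivial hφs hvw
  | eqv i j => exact (hZ.isPartialIso I hI).sat_iff_of_isAtom (α := .eqv i j) trivial hφs hvw
  | fls => exact Iff.rfl
  | neg _ ih => exact not_congr (ih hφs hI hvw)
  | conj _ _ ih₁ ih₂ =>
    obtain ⟨hs₁, hs₂⟩ := Set.union_subset_iff.1 hφs
    exact and_congr (ih₁ hs₁ hI fun i hi => hvw i (.inl hi))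
      (ih₂ hs₂ hI fun i hi => hvw i (.inr hi))
  | disj _ _ ih₁ ih₂ =>
    obtain ⟨hs₁, hs₂⟩ := Set.union_subset_iff.1 hφs
    exact or_congr (ih₁ hs₁ hI fun i hi => hvw i (.inl hi))
      (ih₂ hs₂ hI fun i hi => hvw i (.inr hi))
  | impl _ _ ih₁ ih₂ =>
    obtain ⟨hs₁, hs₂⟩ := Set.union_subset_iff.1 hφs
    exact imp_congr (ih₁ hs₁ hI fun i hi => hvw i (.inl hi))
      (ih₂ hs₂ hI fun i hi => hvw i (.inr hi))
  | allG hα _ hfree ih =>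
    obtain ⟨hαs, hφs⟩ := Set.union_subset_iff.1 hφs
    rw [sat_all_impl_iff_not_sat_ex_conj_neg, sat_all_impl_iff_not_sat_ex_conj_neg]
    exact not_congr <| hZ.sat_ex_conj_iff hI hα hαs hfree
      (fun J hJ v w h => not_congr (ih hφs hJ h)) fun i hi => hvw i ⟨.inl hi.1, hi.2⟩
  | exG hα _ hfree ih =>
    obtain ⟨hαs, hφs⟩ := Set.union_subset_iff.1 hφs
    exact hZ.sat_ex_conj_iff hI hα hαs hfree
      (fun J hJ v w h => ih hφs hJ h) fun i hi => hvw i ⟨.inl hi.1, hi.2⟩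

theorem IsGuardedBisim.satS_of_satS (hZ : IsGuardedBisim Sg M N Z) (hne : Z.Nonempty)
    (hφ : IsGF φ) (hclosed : φ.IsSentence) (hφs : φ.sig ⊆ Sg) (h : SatS M φ) : SatS N φ := by
  obtain ⟨I, hI⟩ := hne
  obtain ⟨a⟩ := M.nonempty
  refine fun w => (hZ.sat_iff hφ hφs hI fun i hi => ?_).1 (h fun _ => a)
  rw [hclosed] at hi
  exact hi.elim

end GuardedBisimulation

section Entailment

variable {σ : Sig} {Sg : Set σ.Pred} {φ₁ φ₂ ψ : Fml σ}

theorem gfEntails_of_forall_exists_isGuardedBisim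
    (h : ∀ N, SatS N φ₁ → ∃ M, SatS M φ₂ ∧ ∃ Z : Set (M.Dom → N.Dom → Prop),
      Z.Nonempty ∧ IsGuardedBisim Sg M N Z) : GFEntails Sg φ₁ φ₂ := by
  intro ψ hψ hclosed hψs hent N hN
  obtain ⟨M, hM, Z, hne, hZ⟩ := h N hN
  exact hZ.satS_of_satS hne hψ hclosed hψs (hent M hM)

theorem not_gfEntails_of_entails_neg (hψ : IsGF ψ) (hclosed : ψ.IsSentence) (hψs : ψ.sig ⊆ Sg)
    (hent : Entails φ₂ (.neg ψ)) (hsat : Satisfiable (.conj φ₁ ψ)) : ¬ GFEntails Sg φ₁ φ₂ := by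
  intro h
  obtain ⟨M, hM⟩ := hsat
  obtain ⟨a⟩ := M.nonempty
  exact h (.neg ψ) (.neg hψ) hclosed hψs hent M (fun v => (hM v).1) (fun _ => a) (hM _).2

end Entailment

section Example

variable {M : Str sig12}

/-- The interpretation of `R` as a binary relation. -/
def Str.R (M : Str sig12) (a b : M.Dom) : Prop := M.rel P12.R ![a, b]

/-- The interpretation of `A` as a unary predicate. -/
def Str.A (M : Str sig12) (a : M.Dom) : Prop := M.rel P12.A ![a]

theorem range_fin_two {α : Type*} (t : Fin 2 → α) : Set.range t = {t 0, t 1} := by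
  rw [← FinVec.etaExpand_eq t]
  exact Matrix.range_cons_cons_empty _ _ _

theorem rel_R_iff (t : Fin 2 → M.Dom) : M.rel P12.R t ↔ M.R (t 0) (t 1) :=
  iff_of_eq (congrArg (M.rel P12.R) (FinVec.etaExpand_eq t).symm)

theorem sat_Rxy {i j : ℕ} {v : ℕ → M.Dom} : Sat M (Rxy i j) v ↔ M.R (v i) (v j) :=
  rel_R_iff _

theorem sat_Ax {i : ℕ} {v : ℕ → M.Dom} : Sat M (Ax i) v ↔ M.A (v i) :=
  iff_of_eq (congrArg (M.rel P12.A) (FinVec.etaExpand_eq fun k : Fin 1 => v (![i] k)).symm)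

theorem satS_phi1_iff :
    SatS M phi1 ↔ (∀ a, ¬ M.R a a) ∧ ∀ a b, M.R a b → M.R b a := by
  have := M.nonempty
  simp [SatS, phi1, ↓sat_all_cons, ↓sat_all_nil, Sat, sat_Rxy]

theorem satS_phi2_iff :
    SatS M phi2 ↔ SatS M phi1 ∧ ∀ a b, M.R a b → (M.A a ↔ ¬ M.A b) := by
  have := M.nonempty
  have sat_phi2_iff (v : ℕ → M.Dom) :
      Sat M phi2 v ↔ Sat M phi1 v ∧ ∀ a b, M.R a b → (M.A a ↔ ¬ M.A b) := by
    simp only [phi2, Sat, ↓sat_all_cons, ↓sat_all_nil, sat_Ax, Function.update_self, sat_Rxy,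
      ne_eq, zero_ne_one, not_false_eq_true, Function.update_of_ne]
    grind
  simp only [SatS, sat_phi2_iff, forall_and, forall_const]

/-- The bipartite double cover of the graph `R` of `M`, with one of the two sides marked by `A`. -/
def doubleCover (M : Str sig12) : Str sig12 where
  Dom := M.Dom × Bool
  nonempty := M.nonempty.map fun a => (a, true)
  rel
    | .R => fun t : Fin 2 → M.Dom × Bool => M.R (t 0).1 (t 1).1 ∧ (t 0).2 ≠ (t 1).2
    | .A => fun t : Fin 1 → M.Dom × Bool => (t 0).2 = true
    | .Q => fun _ => False

theorem doubleCover_R_iff {x y : (doubleCover M).Dom} :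
    (doubleCover M).R x y ↔ M.R x.1 y.1 ∧ x.2 ≠ y.2 :=
  Iff.rfl

theorem doubleCover_A_iff {x : (doubleCover M).Dom} : (doubleCover M).A x ↔ x.2 = true :=
  Iff.rfl

theorem satS_doubleCover_phi2 (hM : SatS M phi1) : SatS (doubleCover M) phi2 := by
  rw [satS_phi1_iff] at hM
  rw [satS_phi2_iff, satS_phi1_iff]
  refine ⟨⟨fun x h => h.2 rfl, fun x y h => ⟨hM.2 _ _ h.1, h.2.symm⟩⟩, fun x y h => ?_⟩
  have hside : x.2 = !y.2 := Bool.eq_not.2 (doubleCover_R_iff.1 h).2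
  rw [doubleCover_A_iff, doubleCover_A_iff, hside, Bool.not_eq_true', Bool.not_eq_true]

/-- `c` is a proper 2-colouring of the subgraph of `M` induced by `S`. -/
def IsProperOn (M : Str sig12) (S : Set M.Dom) (c : M.Dom → Bool) : Prop :=
  ∀ a ∈ S, ∀ b ∈ S, M.R a b → c a ≠ c b

/-- The inverse of the section `a ↦ (a, c a)` of the double cover over `S`, as a graph. -/
def sectionLink (M : Str sig12) (S : Set M.Dom) (c : M.Dom → Bool) :
    (doubleCover M).Dom → M.Dom → Prop :=
  fun x a => a ∈ S ∧ x = (a, c a)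

/-- The section links over properly 2-coloured vertex sets; they form the guarded bisimulation
between the double cover of `M` and `M`. -/
def properSectionLinks (M : Str sig12) : Set ((doubleCover M).Dom → M.Dom → Prop) :=
  {I | ∃ S c, IsProperOn M S c ∧ I = sectionLink M S c}

theorem isPartialIso_sectionLink {S : Set M.Dom} {c : M.Dom → Bool} (hc : IsProperOn M S c) :
    IsPartialIso (σ := sig12) {P12.R} (doubleCover M) M (sectionLink M S c) where
  eq_iff := by
    rintro _ _ a a' ⟨-, rfl⟩ ⟨-, rfl⟩
    exact ⟨congrArg Prod.fst, fun h => by rw [h]⟩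
  rel_iff := by
    rintro _ rfl s t hst
    obtain ⟨h₀, hs₀⟩ := hst (0 : Fin 2)
    obtain ⟨h₁, hs₁⟩ := hst (1 : Fin 2)
    refine (rel_R_iff s).trans (.trans ?_ (rel_R_iff t).symm)
    rw [hs₀, hs₁]
    exact doubleCover_R_iff.trans (and_iff_left_of_imp (hc _ h₀ _ h₁))

theorem isGuarded_R_iff {G : Set M.Dom} :
    IsGuarded (σ := sig12) {P12.R} M G ↔ (∃ a, G = {a}) ∨ ∃ a b, M.R a b ∧ G = {a, b} := by
  refine or_congr_right ⟨?_, ?_⟩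
  · rintro ⟨_, rfl, t, ht, rfl⟩
    exact ⟨_, _, (rel_R_iff t).1 ht, range_fin_two t⟩
  · rintro ⟨a, b, hab, rfl⟩
    exact ⟨P12.R, rfl, ![a, b], hab, (range_fin_two ![a, b]).symm⟩

theorem isProperOn_singleton (hirr : ∀ a, ¬ M.R a a) (a : M.Dom) (c : M.Dom → Bool) :
    IsProperOn M {a} c := by
  rintro _ rfl _ rfl h
  exact (hirr _ h).elim

theorem isProperOn_pair (hirr : ∀ a, ¬ M.R a a) {a b : M.Dom} {c : M.Dom → Bool}
    (hab : c a ≠ c b) : IsProperOn M {a, b} c := by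
  rintro _ (rfl | rfl) _ (rfl | rfl) h
  exacts [(hirr _ h).elim, hab, hab.symm, (hirr _ h).elim]

theorem IsProperOn.exists_isProperOn_eqOn (hirr : ∀ a, ¬ M.R a a) {S G : Set M.Dom}
    {c : M.Dom → Bool} (hc : IsProperOn M S c) (hG : IsGuarded (σ := sig12) {P12.R} M G) :
    ∃ c', IsProperOn M G c' ∧ Set.EqOn c c' (S ∩ G) := by
  classical
  rcases isGuarded_R_iff.1 hG with ⟨a, rfl⟩ | ⟨a, b, hab, rfl⟩
  · exact ⟨c, isProperOn_singleton hirr a c, fun _ _ => rfl⟩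
  have hne : a ≠ b := fun h => hirr b (h ▸ hab)
  by_cases ha : a ∈ S
  · by_cases hb : b ∈ S
    · exact ⟨c, isProperOn_pair hirr (hc a ha b hb hab), fun _ _ => rfl⟩
    · refine ⟨Function.update c b (!c a), isProperOn_pair hirr (by simp [hne]), fun x hx => ?_⟩
      rw [Function.update_of_ne (ne_of_mem_of_not_mem hx.1 hb)]
  · refine ⟨Function.update c a (!c b), isProperOn_pair hirr (by simp [hne.symm]), fun x hx => ?_⟩
    rw [Function.update_of_ne (ne_of_mem_of_not_mem hx.1 ha)]

theorem exists_isProperOn_of_isGuarded_doubleCover (hirr : ∀ a, ¬ M.R a a)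
    {G : Set (doubleCover M).Dom} (hG : IsGuarded (σ := sig12) {P12.R} (doubleCover M) G) :
    ∃ S c, IsProperOn M S c ∧ ∀ x ∈ G, sectionLink M S c x x.1 := by
  classical
  rcases isGuarded_R_iff.1 hG with ⟨x, rfl⟩ | ⟨x, y, hxy, rfl⟩
  · refine ⟨{x.1}, fun _ => x.2, isProperOn_singleton hirr _ _, ?_⟩
    rintro _ rfl
    exact ⟨rfl, rfl⟩
  obtain ⟨hR, hcol⟩ := doubleCover_R_iff.1 hxy
  have hne : x.1 ≠ y.1 := fun h => hirr y.1 (h ▸ hR)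
  refine ⟨{x.1, y.1}, Function.update (fun _ => y.2) x.1 x.2,
    isProperOn_pair hirr (by simpa [hne.symm] using hcol), ?_⟩
  rintro _ (rfl | rfl)
  · exact ⟨.inl rfl, by rw [Function.update_self]; rfl⟩
  · exact ⟨.inr rfl, by rw [Function.update_of_ne hne.symm]; rfl⟩

theorem isGuardedBisim_properSectionLinks (hirr : ∀ a, ¬ M.R a a) :
    IsGuardedBisim (σ := sig12) {P12.R} (doubleCover M) M (properSectionLinks M) where
  isPartialIso := by
    rintro _ ⟨S, c, hc, rfl⟩
    exact isPartialIso_sectionLink hc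
  forth := by
    rintro _ ⟨S, c, -, rfl⟩ G hG
    obtain ⟨S', c', hc', hG'⟩ := exists_isProperOn_of_isGuarded_doubleCover hirr hG
    refine ⟨_, ⟨S', c', hc', rfl⟩, fun x hx => ⟨⟨x.1, hG' x hx⟩, ?_⟩⟩
    rintro a ⟨-, rfl⟩
    exact hG' _ hx
  back := by
    rintro _ ⟨S, c, hc, rfl⟩ G hG
    obtain ⟨c', hc', heq⟩ := hc.exists_isProperOn_eqOn hirr hG
    refine ⟨_, ⟨G, c', hc', rfl⟩, fun a ha => ⟨⟨(a, c' a), ha, rfl⟩, ?_⟩⟩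
    rintro _ ⟨haS, rfl⟩
    exact ⟨ha, by rw [heq ⟨haS, ha⟩]⟩

theorem properSectionLinks_nonempty : (properSectionLinks M).Nonempty :=
  ⟨_, ∅, fun _ => true, fun _ h => h.elim, rfl⟩

theorem gfEntails_phi1_phi2 : GFEntails (σ := sig12) {P12.R} phi1 phi2 :=
  gfEntails_of_forall_exists_isGuardedBisim fun M hM =>
    ⟨doubleCover M, satS_doubleCover_phi2 hM, properSectionLinks M, properSectionLinks_nonempty,
      isGuardedBisim_properSectionLinks (satS_phi1_iff.1 hM).1⟩

theorem entails_phi2_neg_psi12 : Entails phi2 (.neg psi12) := by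
  rintro M hM v ⟨v', -, -, h₀₁, h₁₂, h₂₀⟩
  have hA := (satS_phi2_iff.1 hM).2
  rw [sat_Rxy] at h₀₁ h₁₂ h₂₀
  have hA₀₁ := hA _ _ h₀₁
  have hA₁₂ := hA _ _ h₁₂
  have hA₂₀ := hA _ _ h₂₀
  tauto

/-- The complete graph on three vertices, with `Q` holding everywhere. -/
def triangle : Str sig12 where
  Dom := Fin 3
  nonempty := ⟨0⟩
  rel
    | .R => fun t : Fin 2 → Fin 3 => t 0 ≠ t 1
    | .A => fun _ => False
    | .Q => fun _ => True

theorem satS_triangle_phi1 : SatS triangle phi1 :=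
  satS_phi1_iff.2 ⟨fun _ h => h rfl, fun _ _ => Ne.symm⟩

theorem satS_triangle_psi12 : SatS triangle psi12 := by
  intro v
  simp only [psi12, ↓sat_ex_cons, ↓sat_ex_nil]
  exact ⟨(0 : Fin 3), (1 : Fin 3), (2 : Fin 3), trivial, sat_Rxy.2 (show (0 : Fin 3) ≠ 1 by decide),
    sat_Rxy.2 (show (1 : Fin 3) ≠ 2 by decide), sat_Rxy.2 (show (2 : Fin 3) ≠ 0 by decide)⟩

theorem satisfiable_phi1_conj_psi12 : Satisfiable (.conj phi1 psi12) :=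
  ⟨triangle, fun v => ⟨satS_triangle_phi1 v, satS_triangle_psi12 v⟩⟩

theorem free_Rxy (i j : ℕ) : (Rxy i j).free = {i, j} :=
  Matrix.range_cons_cons_empty i j ![]

theorem free_Qxyz (i j k : ℕ) : (Qxyz i j k).free = {i, j, k} := by
  change Set.range ![i, j, k] = _
  rw [Matrix.range_cons, Matrix.range_cons_cons_empty, Set.singleton_union]

theorem isSentence_psi12 : psi12.IsSentence := by
  refine Set.sdiff_eq_empty.2 fun k => ?_
  simp only [Fml.free, free_Rxy, free_Qxyz, Set.mem_union, Set.mem_insert_iff,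
    Set.mem_singleton_iff, Set.mem_ofPred_eq, List.mem_cons, List.not_mem_nil, or_false]
  omega

theorem isGF_psi12 : IsGF psi12 := by
  have hbody : IsGF (.conj (Rxy 0 1) (.conj (Rxy 1 2) (Rxy 2 0))) :=
    .conj (.rel _ _) (.conj (.rel _ _) (.rel _ _))
  refine .exG (α := Qxyz 0 1 2) trivial hbody fun k => ?_
  simp only [Fml.free, free_Rxy, free_Qxyz, Set.mem_union, Set.mem_insert_iff,
    Set.mem_singleton_iff, Set.mem_ofPred_eq, List.mem_cons, List.not_mem_nil, or_false]
  omega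

theorem sig_psi12 : psi12.sig = ({P12.R, P12.Q} : Set P12) := by
  change ({P12.Q} ∪ ({P12.R} ∪ ({P12.R} ∪ {P12.R})) : Set P12) = _
  simp

theorem sig_phi2 : phi2.sig = ({P12.R, P12.A} : Set P12) := by
  change ((({P12.R} ∪ ∅) ∪ ({P12.R} ∪ {P12.R})) ∪
    (({P12.A} ∪ ({P12.R} ∪ {P12.A})) ∪ ({P12.A} ∪ ({P12.R} ∪ {P12.A}))) : Set P12) = _
  ext p
  cases p <;> simp

theorem inter_sig_phi2_subset : ({P12.R, P12.Q} : Set P12) ∩ phi2.sig ⊆ {P12.R} := by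
  rw [sig_phi2]
  rintro p ⟨rfl | rfl, h⟩
  · rfl
  · simp at h

theorem not_gfEntails_phi1_phi2 : ¬ GFEntails (σ := sig12) {P12.R, P12.Q} phi1 phi2 :=
  not_gfEntails_of_entails_neg isGF_psi12 isSentence_psi12 sig_psi12.subset
    entails_phi2_neg_psi12 satisfiable_phi1_conj_psi12

theorem not_strongGFEntails_phi1_phi2 : ¬ StrongGFEntails (σ := sig12) {P12.R} phi1 phi2 :=
  fun h => not_gfEntails_phi1_phi2
    (h _ (Set.toFinite ({P12.R, P12.Q} : Set P12)) inter_sig_phi2_subset)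

end Example

/-- Example 3 of the paper: `φ₁` GF({R})-entails `φ₂`,
but `φ₂ ⊨ ¬ψ` while `φ₁ ∧ ψ` is satisfiable, so `φ₁` does not
GF({R,Q})-entail `φ₂`; hence GF(Σ)-entailment does not imply strong
GF(Σ)-entailment. -/
theorem gf_entailment_does_not_imply_strong_gf_entailment :
    GFEntails (σ := sig12) {P12.R} phi1 phi2 ∧
    Entails phi2 (.neg psi12) ∧
    Satisfiable (.conj phi1 psi12) ∧
    ¬ GFEntails (σ := sig12) {P12.R, P12.Q} phi1 phi2 ∧
    ¬ StrongGFEntails (σ := sig12) {P12.R} phi1 phi2 := by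
  exact ⟨gfEntails_phi1_phi2, entails_phi2_neg_psi12, satisfiable_phi1_conj_psi12,
    not_gfEntails_phi1_phi2, not_strongGFEntails_phi1_phi2⟩

end FOG
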